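/- Let F : ℝⁿ → ℝ ∪ {+∞} be an ℝ-DDM-convex function and let f be its restriction to ℤⁿ. If F has a unique minimizer x̄ over ℝⁿ, then there exists a minimizer x* of f over ℤⁿ with ‖x* − x̄‖_∞ ≤ n. -/

import Mathlib

open Finset

/-- Directed midpoint `μ(x,y)`: round `(xᵢ+yᵢ)/2` towards `xᵢ`, componentwise:
`μ(x,y)ᵢ = ⌈(xᵢ+yᵢ)/2⌉` if `xᵢ ≥ yᵢ`, and `μ(x,y)ᵢ = ⌊(xᵢ+yᵢ)/2⌋` if `xᵢ < yᵢ`. -/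
def dmu {n : ℕ} (x y : Fin n → ℤ) : Fin n → ℤ := fun i =>
  if y i ≤ x i then ⌈((x i + y i : ℤ) : ℚ) / 2⌉ else ⌊((x i + y i : ℤ) : ℚ) / 2⌋

/-- The ℓ∞-norm of an integer vector, as a natural number. -/
def normInf {n : ℕ} (z : Fin n → ℤ) : ℕ := Finset.univ.sup fun i => (z i).natAbs

/-- A function `f : ℤⁿ → ℝ ∪ {+∞}` is DDM-convex if
`f(x) + f(y) ≥ f(μ(x,y)) + f(μ(y,x))` for all `x, y ∈ ℤⁿ`. -/
def DDMConvexFn {n : ℕ} (f : (Fin n → ℤ) → EReal) : Prop :=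
  ∀ x y : Fin n → ℤ, f (dmu x y) + f (dmu y x) ≤ f x + f y

/-- `F : ℝⁿ → ℝ ∪ {+∞}` is convex (in the extended-real-valued sense). -/
def ERealConvexOn {n : ℕ} (F : (Fin n → ℝ) → EReal) : Prop :=
  ∀ x y : Fin n → ℝ, ∀ a b : ℝ, 0 ≤ a → 0 ≤ b → a + b = 1 →
    F (a • x + b • y) ≤ (a : EReal) * F x + (b : EReal) * F y

/-- A continuous convex function `F : ℝⁿ → ℝ ∪ {+∞}` is ℝ-DDM-convex if for every
positive integer `α` the function `f^{1/α}(x) = F(x/α)` on `ℤⁿ` is DDM-convex. -/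
def RDDMConvex {n : ℕ} (F : (Fin n → ℝ) → EReal) : Prop :=
  Continuous F ∧ ERealConvexOn F ∧
    ∀ α : ℕ, 0 < α →
      DDMConvexFn (fun x : Fin n → ℤ => F (fun i => (x i : ℝ) / (α : ℝ)))

/-!
A DDM-convex function is supermodular along the layers of any displacement `y`: the layers
`layer y k` sum to `y`, and `μ` halves any partial sum of layers, so repeated halving compares
arbitrary partial sums. Applied on the lattices `ℤⁿ / α` and letting `α → ∞`, this yields
`F (x + d) + F (x + y - d) ≤ F x + F (x + y)` whenever `d` is the part of `y` between two heights.

Suppose now that `z ∈ ℤⁿ` has a coordinate at distance at least `n` from `x̄`. By the pigeonhole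
principle some interval `[k, k + 1)` contains no `|x̄ᵢ - zᵢ|`, so the part `d` of `x̄ - z` between
the heights `k` and `k + 1` is an integer vector. The inequality reads
`F (z + d) + F (x̄ - d) ≤ F z + F x̄`, and as `x̄` is a minimizer, `F (z + d) ≤ F z`. Hence every
integer point can be moved into the finite set of integer points near `x̄` without increasing `F`.
-/

open Filter Topology

theorem add_le_add_of_refined_pairs {a b j k o al bl au bu : EReal} (ho_bot : o ≠ ⊥)
    (ho_top : o ≠ ⊤) (hlower : al + bl ≤ j + o) (hupper : au + bu ≤ o + k)
    (ha : a + o ≤ al + au) (hb : b + o ≤ bl + bu) : a + b ≤ j + k := by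
  lift o to ℝ using ⟨ho_top, ho_bot⟩
  refine (EReal.addLECancellable_coe (o + o)).add_le_add_iff_left.1 ?_
  calc ((o + o : ℝ) : EReal) + (a + b)
    _ = (a + o) + (b + o) := by rw [EReal.coe_add]; abel
    _ ≤ (al + au) + (bl + bu) := add_le_add ha hb
    _ = (al + bl) + (au + bu) := add_add_add_comm ..
    _ ≤ (j + o) + (o + k) := add_le_add hlower hupper
    _ = ((o + o : ℝ) : EReal) + (j + k) := by rw [EReal.coe_add]; abel

section Supermodular

variable {ι : Type*} [DecidableEq ι] {A B O : Finset ι}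

theorem symmDiff_inter_ssubset (hlower : A ∩ B ⊆ O) (hupper : O ⊂ A ∪ B) :
    symmDiff (A ∩ O) (B ∩ O) ⊂ symmDiff A B := by
  obtain ⟨x, hx, hxO⟩ := exists_of_ssubset hupper
  refine (ssubset_iff_of_subset ?_).2 ⟨x, ?_, ?_⟩ <;> grind [mem_symmDiff]

theorem symmDiff_union_ssubset (hlower : A ∩ B ⊂ O) (hupper : O ⊆ A ∪ B) :
    symmDiff (A ∪ O) (B ∪ O) ⊂ symmDiff A B := by
  obtain ⟨x, hx, hxO⟩ := exists_of_ssubset hlower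
  refine (ssubset_iff_of_subset ?_).2 ⟨x, ?_, ?_⟩ <;> grind [mem_symmDiff]

theorem symmDiff_ssubset_of_ne (hlower : A ∩ B ⊆ O) (hupper : O ⊆ A ∪ B) (hne : O ≠ B) :
    symmDiff A O ⊂ symmDiff A B :=
  ssubset_of_subset_of_ne (by grind [mem_symmDiff]) ((symmDiff_right_injective A).ne hne)

theorem supermodular_of_exists_complementary_pair {h : Finset ι → EReal} (hbot : ∀ J, h J ≠ ⊥)
    (hsplit : ∀ J K, (Set.Ioo J K).Nonempty →
      ∃ O ∈ Set.Ioo J K, h O + h (J ∪ K \ O) ≤ h J + h K) (A B : Finset ι) :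
    h A + h B ≤ h (A ∩ B) + h (A ∪ B) := by
  induction hm : #(symmDiff A B) using Nat.strong_induction_on generalizing A B with
  | _ m ih =>
  subst hm
  by_cases hAB : A ⊆ B
  · rw [inter_eq_left.2 hAB, union_eq_right.2 hAB]
  by_cases hBA : B ⊆ A
  · rw [inter_eq_right.2 hBA, union_eq_left.2 hBA, add_comm]
  obtain ⟨O, ⟨hJO, hOK⟩, hO⟩ := hsplit (A ∩ B) (A ∪ B) ⟨A, by grind, by grind⟩
  obtain rfl | hOA := eq_or_ne O A
  · convert hO using 3; grind
  obtain rfl | hOB := eq_or_ne O B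
  · rw [add_comm]; convert hO using 3; grind
  by_cases hends : h (A ∩ B) + h (A ∪ B) = ⊤
  · exact hends ▸ le_top
  -- The set `O` refines the square `A ∩ B, A, B, A ∪ B` into four smaller ones; in the sum of
  -- their inequalities everything but the claim cancels.
  have smaller {C D : Finset ι} (hCD : symmDiff C D ⊂ symmDiff A B) :
      h C + h D ≤ h (C ∩ D) + h (C ∪ D) := ih _ (card_lt_card hCD) C D rfl
  have hlower := smaller (symmDiff_inter_ssubset hJO.subset hOK)
  have hupper := smaller (symmDiff_union_ssubset hJO hOK.subset)
  have hA := smaller (symmDiff_ssubset_of_ne hJO.subset hOK.subset hOB)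
  have hB := smaller (symmDiff_comm A B ▸
    symmDiff_ssubset_of_ne (inter_comm A B ▸ hJO.subset) (union_comm A B ▸ hOK.subset) hOA)
  rw [show A ∩ O ∩ (B ∩ O) = A ∩ B by grind, show A ∩ O ∪ B ∩ O = O by grind] at hlower
  rw [show (A ∪ O) ∩ (B ∪ O) = O by grind, show A ∪ O ∪ (B ∪ O) = A ∪ B by grind] at hupper
  have hO_top : h O ≠ ⊤ :=
    ((EReal.add_ne_top_iff_ne_top₂ (hbot _) (hbot _)).1 (ne_top_of_le_ne_top hends hO)).1
  exact add_le_add_of_refined_pairs (hbot O) hO_top hlower hupper hA hB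

end Supermodular

theorem count_mem_eq_card {K : Finset ℕ} {m : ℕ} (hK : K ⊆ range m) :
    Nat.count (· ∈ K) m = #K := by
  rw [Nat.count_eq_card_filter_range, filter_mem_eq_inter, inter_eq_right.2 hK]

theorem exists_subset_count_eq_half (K : Finset ℕ) :
    ∃ O ⊆ K, #O = #K / 2 ∧ ∀ t, Nat.count (· ∈ O) t = Nat.count (· ∈ K) t / 2 := by
  -- `O` consists of every other element of `K`, starting with the second smallest.
  obtain ⟨O, hO⟩ : ∃ O : Finset ℕ, ∀ k, k ∈ O ↔ k ∈ K ∧ Odd (Nat.count (· ∈ K) k) :=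
    ⟨{k ∈ K | Odd (Nat.count (· ∈ K) k)}, fun _ => mem_filter⟩
  have hOK : O ⊆ K := fun k hk => ((hO k).1 hk).1
  have hcount (t : ℕ) : Nat.count (· ∈ O) t = Nat.count (· ∈ K) t / 2 := by
    induction t with
    | zero => simp
    | succ t ih =>
      rw [Nat.count_succ, Nat.count_succ, ih]
      grind
  obtain ⟨m, hm⟩ := K.exists_nat_subset_range
  refine ⟨O, hOK, ?_, hcount⟩
  rw [← count_mem_eq_card (hOK.trans hm), ← count_mem_eq_card hm, hcount]

theorem dmu_apply {n : ℕ} (x y : Fin n → ℤ) (i : Fin n) :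
    dmu x y i = x i + (y i - x i).tdiv 2 := by
  have hceil := Rat.ceil_intCast_div_natCast (x i + y i) 2
  have hfloor := Rat.floor_intCast_div_natCast (x i + y i) 2
  simp only [Nat.cast_ofNat] at hceil hfloor
  rw [dmu, hceil, hfloor]
  grind [Int.tdiv_eq_ediv]

theorem dmu_add_dmu_swap {n : ℕ} (x y : Fin n → ℤ) : dmu x y + dmu y x = x + y := by
  funext i
  have hneg : (x i - y i).tdiv 2 = -(y i - x i).tdiv 2 := by rw [← Int.neg_tdiv, neg_sub]
  simp only [Pi.add_apply, dmu_apply, hneg]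
  ring

/-- The `k`-th layer of an integer vector `y`: the `{-1, 0, 1}`-vector of the signs of those
coordinates whose absolute value exceeds `k`. The layers of `y` sum to `y`. -/
def layer {ι : Type*} (y : ι → ℤ) (k : ℕ) : ι → ℤ := fun i =>
  if k < (y i).natAbs then (y i).sign else 0

/-- The coordinatewise truncation of `y` to `[-a, a]`. For `0 ≤ a ≤ b` the difference
`clamp b y - clamp a y` is the part of `y` between the heights `a` and `b`. -/
def clamp {ι R : Type*} [Lattice R] [Neg R] (a : R) (y : ι → R) : ι → R := fun i =>
  max (-a) (min a (y i))

theorem sum_layer_apply {ι : Type*} (y : ι → ℤ) (J : Finset ℕ) (i : ι) :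
    (∑ k ∈ J, layer y k) i = (y i).sign * Nat.count (· ∈ J) (y i).natAbs := by
  have hcount : Nat.count (· ∈ J) (y i).natAbs = #{k ∈ J | k < (y i).natAbs} := by
    rw [Nat.count_eq_card_filter_range]; congr 1; ext; simp [and_comm]
  simp only [hcount, layer, Finset.sum_apply, ← sum_filter, sum_const, nsmul_eq_mul, mul_comm]

theorem sum_range_layer {ι : Type*} (y : ι → ℤ) (a : ℕ) :
    ∑ k ∈ range a, layer y k = clamp (a : ℤ) y := by
  funext i
  induction a with
  | zero => simp [clamp]
  | succ a ih =>
    rw [sum_range_succ, Pi.add_apply, ih]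
    obtain h | h | h := lt_trichotomy (y i) 0
    · grind [clamp, layer, Int.sign_eq_neg_one_of_neg h]
    · grind [clamp, layer]
    · grind [clamp, layer, Int.sign_eq_one_of_pos h]

theorem sum_Ico_layer {ι : Type*} (y : ι → ℤ) {a b : ℕ} (hab : a ≤ b) :
    ∑ k ∈ Ico a b, layer y k = clamp (b : ℤ) y - clamp (a : ℤ) y := by
  rw [sum_Ico_eq_sub _ hab, sum_range_layer, sum_range_layer]

theorem exists_sum_range_layer_eq {ι : Type*} [Finite ι] (y : ι → ℤ) (b : ℕ) :
    ∃ m ≥ b, ∑ k ∈ range m, layer y k = y := by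
  cases nonempty_fintype ι
  refine ⟨max b (univ.sup fun i => (y i).natAbs), le_max_left .., ?_⟩
  rw [sum_range_layer]
  funext i
  have := le_sup (f := fun i => (y i).natAbs) (mem_univ i)
  grind [clamp]

theorem exists_dmu_add_sum_layer {n : ℕ} (x y : Fin n → ℤ) {J K : Finset ℕ} (hJK : J ⊆ K) :
    ∃ O ⊆ K \ J, #O = #(K \ J) / 2 ∧
      dmu (x + ∑ k ∈ J, layer y k) (x + ∑ k ∈ K, layer y k) = x + ∑ k ∈ J ∪ O, layer y k := by
  obtain ⟨O, hO, hcard, hcount⟩ := exists_subset_count_eq_half (K \ J)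
  refine ⟨O, hO, hcard, ?_⟩
  rw [sum_union (disjoint_sdiff.mono_right hO), ← sum_sdiff hJK]
  funext i
  have htdiv : ((∑ k ∈ K \ J, layer y k) i).tdiv 2 = (∑ k ∈ O, layer y k) i := by
    rw [sum_layer_apply, sum_layer_apply, hcount]
    obtain h | h | h := (y i).sign_trichotomy <;> simp [h]
  simp only [dmu_apply, Pi.add_apply, ← htdiv]
  grind

namespace DDMConvexFn

variable {n : ℕ} {g : (Fin n → ℤ) → EReal}

theorem exists_layer_split (hg : DDMConvexFn g) (x y : Fin n → ℤ) {J K : Finset ℕ}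
    (hJK : (Set.Ioo J K).Nonempty) :
    ∃ O ∈ Set.Ioo J K, g (x + ∑ k ∈ O, layer y k) + g (x + ∑ k ∈ J ∪ K \ O, layer y k) ≤
      g (x + ∑ k ∈ J, layer y k) + g (x + ∑ k ∈ K, layer y k) := by
  obtain ⟨A, hJA, hAK⟩ := hJK
  have hsub : J ⊆ K := hJA.subset.trans hAK.subset
  obtain ⟨H, hH, hcard, hmid⟩ := exists_dmu_add_sum_layer x y hsub
  have htwo : 2 ≤ #(K \ J) := by
    have := card_sdiff_of_subset hsub
    have := card_lt_card hJA
    have := card_lt_card hAK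
    omega
  have hHpos : H.Nonempty := card_pos.1 (by omega)
  have hHne : H ≠ K \ J := by rintro rfl; omega
  refine ⟨J ∪ H, ⟨by grind, by grind⟩, ?_⟩
  have hcompl : dmu (x + ∑ k ∈ K, layer y k) (x + ∑ k ∈ J, layer y k) =
      x + ∑ k ∈ J ∪ K \ (J ∪ H), layer y k := by
    have hmod := sum_union_inter (s₁ := J ∪ H) (s₂ := J ∪ K \ (J ∪ H)) (f := layer y)
    rw [show (J ∪ H) ∪ (J ∪ K \ (J ∪ H)) = K by grind,
      show (J ∪ H) ∩ (J ∪ K \ (J ∪ H)) = J by grind] at hmod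
    have hswap := dmu_add_dmu_swap (x + ∑ k ∈ J, layer y k) (x + ∑ k ∈ K, layer y k)
    rw [hmid] at hswap
    rw [eq_sub_of_add_eq' hswap, eq_sub_of_add_eq' hmod.symm]
    abel
  rw [← hmid, ← hcompl]
  exact hg _ _

theorem add_clamp_sub_clamp_le (hg : DDMConvexFn g) (hbot : ∀ x, g x ≠ ⊥) (x y : Fin n → ℤ)
    {a b : ℕ} (hab : a ≤ b) :
    g (x + (clamp (b : ℤ) y - clamp (a : ℤ) y)) +
        g (x + (y - (clamp (b : ℤ) y - clamp (a : ℤ) y))) ≤ g x + g (x + y) := by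
  obtain ⟨m, hbm, hm⟩ := exists_sum_range_layer_eq y b
  have hsub : Ico a b ⊆ range m := by grind
  have hcompl : ∑ k ∈ range m \ Ico a b, layer y k = y - ∑ k ∈ Ico a b, layer y k := by
    rw [sum_sdiff_eq_sub hsub, hm]
  have key := supermodular_of_exists_complementary_pair (fun J => hbot (x + ∑ k ∈ J, layer y k))
    (fun _ _ => hg.exists_layer_split x y) (Ico a b) (range m \ Ico a b)
  rwa [inter_sdiff_self, union_sdiff_of_subset hsub, hcompl, hm, sum_empty, add_zero,
    sum_Ico_layer y hab] at key

end DDMConvexFn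

theorem tendsto_floor_mul_div_atTop (a : ℝ) :
    Tendsto (fun α : ℝ => (⌊a * α⌋ : ℝ) / α) atTop (𝓝 a) := by
  have hlower : Tendsto (fun α : ℝ => a - α⁻¹) atTop (𝓝 a) := by
    simpa using tendsto_inv_atTop_zero.const_sub a
  refine tendsto_of_tendsto_of_tendsto_of_le_of_le' hlower tendsto_const_nhds ?_ ?_
  all_goals filter_upwards [eventually_gt_atTop 0] with α hα
  · rw [le_div_iff₀ hα, sub_mul, inv_mul_cancel₀ hα.ne']
    exact (Int.sub_one_lt_floor _).le
  · rw [div_le_iff₀ hα]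
    exact Int.floor_le _

theorem clamp_intCast_div {ι : Type*} (A : ℤ) (Y : ι → ℤ) {α : ℝ} (hα : 0 ≤ α) (i : ι) :
    (clamp A Y i : ℤ) / α = clamp (A / α) (fun i => Y i / α) i := by
  simp only [clamp, Int.cast_max, Int.cast_min, Int.cast_neg, max_div_div_right hα,
    min_div_div_right hα, ← neg_div]

theorem tendsto_clamp {ι κ : Type*} {l : Filter κ} {u : κ → ℝ} {v : κ → ι → ℝ} {a : ℝ} {y : ι → ℝ}
    (hu : Tendsto u l (𝓝 a)) (hv : Tendsto v l (𝓝 y)) :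
    Tendsto (fun t => clamp (u t) (v t)) l (𝓝 (clamp a y)) :=
  tendsto_pi_nhds.2 fun i => hu.neg.max (hu.min (hv.apply_nhds i))

namespace RDDMConvex

variable {n : ℕ} {F : (Fin n → ℝ) → EReal}

theorem add_clamp_div_sub_clamp_div_le (hF : RDDMConvex F) (hbot : ∀ x, F x ≠ ⊥) {α : ℕ}
    (hα : 0 < α) (X Y : Fin n → ℤ) {A B : ℕ} (hAB : A ≤ B) :
    let x : Fin n → ℝ := fun i => X i / α
    let y : Fin n → ℝ := fun i => Y i / α
    let d := clamp (B / α : ℝ) y - clamp (A / α : ℝ) y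
    F (x + d) + F (x + (y - d)) ≤ F x + F (x + y) := by
  intro x y d
  convert (hF.2.2 α hα).add_clamp_sub_clamp_le (fun _ => hbot _) X Y hAB using 3 <;> funext i <;>
    simp [x, y, d, add_div, sub_div, clamp_intCast_div]

theorem add_clamp_sub_clamp_le (hF : RDDMConvex F) (hbot : ∀ x, F x ≠ ⊥) (x y : Fin n → ℝ)
    {a b : ℝ} (ha : 0 ≤ a) (hab : a ≤ b) :
    F (x + (clamp b y - clamp a y)) + F (x + (y - (clamp b y - clamp a y))) ≤
      F x + F (x + y) := by
  have hfloor (z : Fin n → ℝ) :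
      Tendsto (fun α : ℕ => fun i => (⌊z i * α⌋ : ℝ) / α) atTop (𝓝 z) :=
    tendsto_pi_nhds.2 fun i => (tendsto_floor_mul_div_atTop (z i)).comp tendsto_natCast_atTop_atTop
  have hheight {c : ℝ} (hc : 0 ≤ c) :
      Tendsto (fun α : ℕ => (⌊c * α⌋₊ : ℝ) / α) atTop (𝓝 c) :=
    (tendsto_nat_floor_mul_div_atTop hc).comp tendsto_natCast_atTop_atTop
  have hF_add {u v : ℕ → Fin n → ℝ} {p q : Fin n → ℝ} (hu : Tendsto u atTop (𝓝 p))
      (hv : Tendsto v atTop (𝓝 q)) :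
      Tendsto (fun α => F (u α) + F (v α)) atTop (𝓝 (F p + F q)) :=
    (EReal.continuousAt_add (.inr (hbot q)) (.inl (hbot p))).tendsto.comp
      (((hF.1.tendsto p).comp hu).prodMk_nhds ((hF.1.tendsto q).comp hv))
  have hx := hfloor x
  have hy := hfloor y
  have hd := (tendsto_clamp (hheight (ha.trans hab)) hy).sub (tendsto_clamp (hheight ha) hy)
  refine le_of_tendsto_of_tendsto (hF_add (hx.add hd) (hx.add (hy.sub hd)))
    (hF_add hx (hx.add hy)) ?_
  filter_upwards [eventually_gt_atTop 0] with α hα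
  exact hF.add_clamp_div_sub_clamp_div_le hbot hα _ _ (Nat.floor_mono (by gcongr))

end RDDMConvex

theorem abs_sub_clamp_sub_clamp {ι : Type*} (y : ι → ℝ) {a b : ℝ} (ha : 0 ≤ a) (hab : a ≤ b)
    (i : ι) :
    |y i - (clamp b y i - clamp a y i)| = |y i| - (min b |y i| - min a |y i|) := by
  obtain hy | hy := le_total 0 (y i) <;> grind [clamp]

theorem exists_intCast_eq_clamp_add_one_sub_clamp {ι : Type*} {y : ι → ℝ} {a : ℝ} (ha : 0 ≤ a)
    (hgap : ∀ i, |y i| ∉ Set.Ico a (a + 1)) :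
    ∃ e : ι → ℤ, (fun i => (e i : ℝ)) = clamp (a + 1) y - clamp a y := by
  have hcoord (i : ι) : ∃ m : ℤ, (m : ℝ) = clamp (a + 1) y i - clamp a y i := by
    obtain hi | hi : |y i| < a ∨ a + 1 ≤ |y i| := by grind
    · exact ⟨0, by grind [clamp]⟩
    · obtain hneg | hpos := lt_or_ge (y i) 0
      · exact ⟨-1, by grind [clamp]⟩
      · exact ⟨1, by grind [clamp]⟩
  choose e he using hcoord
  exact ⟨e, funext he⟩

theorem sum_floor_abs_sub_clamp_sub_clamp_lt {ι : Type*} [Fintype ι] {y : ι → ℝ} {a : ℝ}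
    (ha : 0 ≤ a) {i₀ : ι} (hi₀ : a + 1 ≤ |y i₀|) :
    ∑ i, ⌊|y i - (clamp (a + 1) y i - clamp a y i)|⌋₊ < ∑ i, ⌊|y i|⌋₊ := by
  simp only [abs_sub_clamp_sub_clamp y ha (le_add_of_nonneg_right zero_le_one)]
  refine sum_lt_sum (fun i _ => Nat.floor_mono (by grind)) ⟨i₀, mem_univ i₀, ?_⟩
  rw [min_eq_left hi₀, min_eq_left (by linarith), add_sub_cancel_left, Nat.floor_sub_one]
  exact Nat.sub_one_lt (Nat.floor_pos.2 (by linarith)).ne'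

theorem exists_nat_forall_notMem_Ico {ι : Type*} [Fintype ι] (r : ι → ℝ) {i₀ : ι}
    (hi₀ : Fintype.card ι ≤ r i₀) :
    ∃ k : ℕ, k + 1 ≤ r i₀ ∧ ∀ i, r i ∉ Set.Ico (k : ℝ) (k + 1) := by
  classical
  have hcard : #((univ.erase i₀).image fun i => ⌊r i⌋₊) < #(range (Fintype.card ι)) := by
    rw [card_range]
    exact card_image_le.trans_lt (card_erase_lt_of_mem (mem_univ i₀))
  obtain ⟨k, hk, hkr⟩ := exists_mem_notMem_of_card_lt_card hcard
  have hk₀ : (k + 1 : ℝ) ≤ r i₀ := le_trans (mod_cast mem_range.1 hk) hi₀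
  refine ⟨k, hk₀, fun i hi => ?_⟩
  obtain rfl | hne := eq_or_ne i i₀
  · exact hi.2.not_ge hk₀
  · exact hkr (mem_image.2 ⟨i, by simp [hne], Nat.floor_eq_on_Ico k _ hi⟩)

namespace RDDMConvex

variable {n : ℕ} {F : (Fin n → ℝ) → EReal} {xbar : Fin n → ℝ}

theorem apply_add_clamp_sub_clamp_le (hF : RDDMConvex F) (hbot : ∀ x, F x ≠ ⊥)
    (hmin : ∀ z, F xbar ≤ F z) (z : Fin n → ℝ) {a b : ℝ} (ha : 0 ≤ a) (hab : a ≤ b) :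
    F (z + (clamp b (xbar - z) - clamp a (xbar - z))) ≤ F z := by
  by_cases hz : F z = ⊤
  · exact hz ▸ le_top
  set d := clamp b (xbar - z) - clamp a (xbar - z)
  lift F xbar to ℝ using ⟨ne_top_of_le_ne_top hz (hmin z), hbot xbar⟩ with m hm
  refine (EReal.addLECancellable_coe m).add_le_add_iff_right.1 ?_
  calc F (z + d) + m
    _ ≤ F (z + d) + F (z + (xbar - z - d)) := by gcongr; exact hmin _
    _ ≤ F z + F (z + (xbar - z)) := hF.add_clamp_sub_clamp_le hbot z _ ha hab
    _ = F z + m := by rw [add_sub_cancel, hm]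

theorem exists_int_closer (hF : RDDMConvex F) (hbot : ∀ x, F x ≠ ⊥) (hmin : ∀ z, F xbar ≤ F z)
    (z : Fin n → ℤ) {i₀ : Fin n} (hi₀ : n ≤ |xbar i₀ - z i₀|) :
    ∃ w : Fin n → ℤ, F (fun i => w i) ≤ F (fun i => z i) ∧
      ∑ i, ⌊|xbar i - w i|⌋₊ < ∑ i, ⌊|xbar i - z i|⌋₊ := by
  set y : Fin n → ℝ := xbar - fun i => (z i : ℝ)
  obtain ⟨k, hk, hgap⟩ := exists_nat_forall_notMem_Ico (fun i => |y i|) (i₀ := i₀) (by simpa)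
  obtain ⟨e, he⟩ := exists_intCast_eq_clamp_add_one_sub_clamp k.cast_nonneg hgap
  have hw (i : Fin n) : ((z + e) i : ℝ) = z i + (clamp (k + 1 : ℝ) y i - clamp (k : ℝ) y i) := by
    rw [Pi.add_apply, Int.cast_add]
    exact congrArg _ (congrFun he i)
  refine ⟨z + e, ?_, ?_⟩
  · simp only [hw]
    exact hF.apply_add_clamp_sub_clamp_le hbot hmin _ k.cast_nonneg (by simp)
  · simp only [hw, ← sub_sub]
    exact sum_floor_abs_sub_clamp_sub_clamp_lt k.cast_nonneg hk

theorem exists_int_near (hF : RDDMConvex F) (hbot : ∀ x, F x ≠ ⊥) (hmin : ∀ z, F xbar ≤ F z)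
    (z : Fin n → ℤ) :
    ∃ w : Fin n → ℤ, F (fun i => w i) ≤ F (fun i => z i) ∧ ∀ i, |w i - xbar i| < n := by
  induction hm : ∑ i, ⌊|xbar i - z i|⌋₊ using Nat.strong_induction_on generalizing z with
  | _ m ih =>
  by_cases hnear : ∀ i, |z i - xbar i| < n
  · exact ⟨z, le_rfl, hnear⟩
  push Not at hnear
  obtain ⟨i₀, hi₀⟩ := hnear
  obtain ⟨z', hz', hlt⟩ := hF.exists_int_closer hbot hmin z (abs_sub_comm (xbar i₀) _ ▸ hi₀)
  obtain ⟨w, hw, hnear⟩ := ih _ (hm ▸ hlt) z' rfl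
  exact ⟨w, hw.trans hz', hnear⟩

end RDDMConvex

theorem finite_setOf_forall_abs_intCast_sub_lt {ι : Type*} [Finite ι] (x : ι → ℝ) (r : ℝ) :
    {z : ι → ℤ | ∀ i, |z i - x i| < r}.Finite := by
  cases nonempty_fintype ι
  classical
  refine (Set.finite_Icc (fun i => ⌈x i - r⌉) fun i => ⌊x i + r⌋).subset fun z hz => ?_
  have hz (i : ι) := abs_lt.1 (hz i)
  exact ⟨fun i => Int.ceil_le.2 (by linarith [hz i]), fun i => Int.le_floor.2 (by linarith [hz i])⟩

theorem rddmConvex_proximity_continuous_to_discrete_general {n : ℕ}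
    (F : (Fin n → ℝ) → EReal) (hbot : ∀ x, F x ≠ ⊥) (hF : RDDMConvex F)
    (xbar : Fin n → ℝ) (hmin : ∀ z : Fin n → ℝ, F xbar ≤ F z) :
    ∃ xstar : Fin n → ℤ,
      (∀ z : Fin n → ℤ, F (fun i => (xstar i : ℝ)) ≤ F (fun i => (z i : ℝ))) ∧
      ∀ i, |xstar i - xbar i| < n := by
  have hnear := hF.exists_int_near hbot hmin
  obtain ⟨w₀, -, hw₀⟩ := hnear 0
  obtain ⟨xstar, hxstar, hle⟩ := Set.exists_min_image _ (fun z : Fin n → ℤ => F fun i => (z i : ℝ))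
    (finite_setOf_forall_abs_intCast_sub_lt xbar n) ⟨w₀, hw₀⟩
  refine ⟨xstar, fun z => ?_, hxstar⟩
  obtain ⟨w, hwz, hw⟩ := hnear z
  exact (hle w hw).trans hwz

/-- For an ℝ-DDM-convex `F` with restriction `f` to `ℤⁿ`: if `F` has a unique
minimizer `x̄` over `ℝⁿ`, then `f` has a minimizer `x*` over `ℤⁿ` with
`‖x* - x̄‖_∞ ≤ n`. -/
theorem rddmConvex_proximity_continuous_to_discrete {n : ℕ}
    (F : (Fin n → ℝ) → EReal) (hbot : ∀ x, F x ≠ ⊥) (hF : RDDMConvex F)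
    (xbar : Fin n → ℝ) (hmin : ∀ z : Fin n → ℝ, F xbar ≤ F z)
    (huniq : ∀ z : Fin n → ℝ, (∀ w : Fin n → ℝ, F z ≤ F w) → z = xbar) :
    ∃ xstar : Fin n → ℤ,
      (∀ z : Fin n → ℤ, F (fun i => (xstar i : ℝ)) ≤ F (fun i => (z i : ℝ))) ∧
      ‖(fun i => (xstar i : ℝ)) - xbar‖ ≤ (n : ℝ) := by
  obtain ⟨xstar, hxstar, hnear⟩ :=
    rddmConvex_proximity_continuous_to_discrete_general F hbot hF xbar hmin
  exact ⟨xstar, hxstar, (pi_norm_le_iff_of_nonneg n.cast_nonneg).2 fun i => (hnear i).le⟩
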